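/- Let g₁, g₂ be Schwartz functions on ℝ and let α > 0. There exists a constant C > 0 such that for all τ, λ ∈ ℝ and every real M ≥ 1: ∫_ℝ |g₁(τ−μ)|·|g₂(μ−λ)|·min(M^{−1}, ⟨μ⟩^{−1}) dμ ≤ C·⟨τ−λ⟩^{−α}·min(M^{−1}, ⟨λ⟩^{−1}). -/

import Mathlib

open MeasureTheory

/-!
Everything rests on Peetre's inequality `⟨x + y⟩ ≤ √2 ⟨x⟩ ⟨y⟩`. Applied to `λ = (λ - μ) + μ` it
moves the weight `min(M⁻¹, ⟨μ⟩⁻¹)` from `μ` to `λ` at the cost of a factor `⟨μ - λ⟩`. Applied to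
`τ - λ = (τ - μ) + (μ - λ)` it gives the decay `⟨τ - λ⟩^(-α)` at the cost of factors
`⟨τ - μ⟩^N ⟨μ - λ⟩^N` with `N ≥ α`. The boundedness of `⟨x⟩^N ‖g₁ x‖` absorbs the first of these,
and the integrability of `⟨x⟩^(N + 1) ‖g₂ x‖` absorbs the rest.
-/

section JapaneseBracket

variable {E : Type*} [SeminormedAddCommGroup E]

/-- The Japanese bracket `⟨x⟩ = (1 + ‖x‖²)^(1/2)`, the smooth substitute for `1 + ‖x‖` in which
decay rates are measured. -/
noncomputable def japaneseBracket (x : E) : ℝ := √(1 + ‖x‖ ^ 2)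

lemma one_le_japaneseBracket (x : E) : 1 ≤ japaneseBracket x :=
  Real.one_le_sqrt.2 (le_add_of_nonneg_right (sq_nonneg _))

lemma japaneseBracket_pos (x : E) : 0 < japaneseBracket x :=
  one_pos.trans_le (one_le_japaneseBracket x)

lemma japaneseBracket_sub_comm (x y : E) : japaneseBracket (x - y) = japaneseBracket (y - x) := by
  rw [japaneseBracket, norm_sub_rev, japaneseBracket]

lemma continuous_japaneseBracket : Continuous (japaneseBracket : E → ℝ) := by
  unfold japaneseBracket
  fun_prop

lemma japaneseBracket_rpow (x : E) (s : ℝ) : japaneseBracket x ^ s = (1 + ‖x‖ ^ 2) ^ (s / 2) := by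
  rw [japaneseBracket, Real.sqrt_eq_rpow, ← Real.rpow_mul (by positivity), one_div_mul_eq_div]

lemma japaneseBracket_add_le (x y : E) :
    japaneseBracket (x + y) ≤ √2 * japaneseBracket x * japaneseBracket y := by
  have norm_sq_add_le : ‖x + y‖ ^ 2 ≤ (‖x‖ + ‖y‖) ^ 2 := by gcongr; exact norm_add_le x y
  simp only [japaneseBracket]
  rw [← Real.sqrt_mul (by positivity), ← Real.sqrt_mul (by positivity)]
  refine Real.sqrt_le_sqrt ?_
  nlinarith [sq_nonneg (‖x‖ - ‖y‖), sq_nonneg (‖x‖ * ‖y‖)]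

lemma japaneseBracket_add_rpow_le {α : ℝ} {N : ℕ} (hN : α ≤ N) (x y : E) :
    japaneseBracket (x + y) ^ α ≤ (√2 * japaneseBracket x * japaneseBracket y) ^ N :=
  calc japaneseBracket (x + y) ^ α
      ≤ japaneseBracket (x + y) ^ (N : ℝ) :=
        Real.rpow_le_rpow_of_exponent_le (one_le_japaneseBracket _) hN
    _ = japaneseBracket (x + y) ^ N := Real.rpow_natCast _ _
    _ ≤ (√2 * japaneseBracket x * japaneseBracket y) ^ N :=
        pow_le_pow_left₀ (japaneseBracket_pos _).le (japaneseBracket_add_le x y) N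

lemma inv_japaneseBracket_le (x y : E) :
    (japaneseBracket x)⁻¹ ≤ √2 * japaneseBracket (x - y) * (japaneseBracket y)⁻¹ := by
  have peetre : japaneseBracket y ≤ √2 * japaneseBracket (x - y) * japaneseBracket x := by
    simpa only [sub_add_cancel, japaneseBracket_sub_comm y x]
      using japaneseBracket_add_le (y - x) x
  rwa [← div_eq_mul_inv, le_div_iff₀ (japaneseBracket_pos y),
    inv_mul_le_iff₀ (japaneseBracket_pos x), mul_comm (japaneseBracket x)]

lemma min_inv_japaneseBracket_le {c : ℝ} (hc : 0 ≤ c) (x y : E) :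
    min c (japaneseBracket x)⁻¹ ≤
      √2 * japaneseBracket (x - y) * min c (japaneseBracket y)⁻¹ := by
  have one_le_factor : 1 ≤ √2 * japaneseBracket (x - y) :=
    one_le_mul_of_one_le_of_one_le (Real.one_le_sqrt.2 one_le_two) (one_le_japaneseBracket _)
  rw [mul_min_of_nonneg _ _ (zero_le_one.trans one_le_factor)]
  exact min_le_min (le_mul_of_one_le_left hc one_le_factor) (inv_japaneseBracket_le x y)

lemma min_inv_japaneseBracket_nonneg {c : ℝ} (hc : 0 ≤ c) (x : E) :
    0 ≤ min c (japaneseBracket x)⁻¹ :=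
  le_min hc (inv_nonneg.2 (japaneseBracket_pos x).le)

end JapaneseBracket

section WeightedConvolution

variable {E : Type*} [SeminormedAddCommGroup E] {f₁ f₂ : E → ℝ} {C₁ α c : ℝ} {N : ℕ}

lemma mul_mul_min_inv_japaneseBracket_le (hf₁ : ∀ x, 0 ≤ f₁ x) (hf₂ : ∀ x, 0 ≤ f₂ x)
    (hC₁ : ∀ x, japaneseBracket x ^ N * f₁ x ≤ C₁) (hN : α ≤ N) (hc : 0 ≤ c) (t l x : E) :
    f₁ (t - x) * f₂ (x - l) * min c (japaneseBracket x)⁻¹ ≤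
      √2 ^ (N + 1) * C₁ * japaneseBracket (t - l) ^ (-α) * min c (japaneseBracket l)⁻¹ *
        (japaneseBracket (x - l) ^ (N + 1) * f₂ (x - l)) := by
  set A := japaneseBracket (t - x)
  set B := japaneseBracket (x - l)
  set T := japaneseBracket (t - l) with hT
  set w := min c (japaneseBracket l)⁻¹
  have B_pos : 0 < B := japaneseBracket_pos _
  have T_pos : 0 < T := japaneseBracket_pos _
  have w_nonneg : 0 ≤ w := min_inv_japaneseBracket_nonneg hc l
  have peetre : T ^ α ≤ (√2 * A * B) ^ N := by
    simpa only [hT, sub_add_sub_cancel] using japaneseBracket_add_rpow_le hN (t - x) (x - l)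
  have one_le_factor : 1 ≤ (√2 * A * B) ^ N * T ^ (-α) := by
    rwa [Real.rpow_neg T_pos.le, ← div_eq_mul_inv, one_le_div (Real.rpow_pos_of_pos T_pos α)]
  have f₁_nonneg := hf₁ (t - x)
  have f₂_nonneg := hf₂ (x - l)
  calc f₁ (t - x) * f₂ (x - l) * min c (japaneseBracket x)⁻¹
      ≤ f₁ (t - x) * f₂ (x - l) * (√2 * B * w) := by
        gcongr
        exact min_inv_japaneseBracket_le hc x l
    _ ≤ f₁ (t - x) * f₂ (x - l) * (√2 * B * w) * ((√2 * A * B) ^ N * T ^ (-α)) :=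
        le_mul_of_one_le_right (by positivity) one_le_factor
    _ = √2 ^ (N + 1) * (A ^ N * f₁ (t - x)) * T ^ (-α) * w * (B ^ (N + 1) * f₂ (x - l)) := by
        ring
    _ ≤ √2 ^ (N + 1) * C₁ * T ^ (-α) * w * (B ^ (N + 1) * f₂ (x - l)) := by
        gcongr
        exact hC₁ (t - x)

lemma integral_mul_mul_min_inv_japaneseBracket_le [MeasurableSpace E] [MeasurableAdd E]
    {ν : Measure E} [ν.IsAddRightInvariant] (hf₁ : ∀ x, 0 ≤ f₁ x) (hf₂ : ∀ x, 0 ≤ f₂ x)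
    (hC₁ : ∀ x, japaneseBracket x ^ N * f₁ x ≤ C₁)
    (hint : Integrable (fun x ↦ japaneseBracket x ^ (N + 1) * f₂ x) ν)
    (hN : α ≤ N) (hc : 0 ≤ c) (t l : E) :
    ∫ x, f₁ (t - x) * f₂ (x - l) * min c (japaneseBracket x)⁻¹ ∂ν ≤
      √2 ^ (N + 1) * C₁ * (∫ x, japaneseBracket x ^ (N + 1) * f₂ x ∂ν) *
        japaneseBracket (t - l) ^ (-α) * min c (japaneseBracket l)⁻¹ := by
  set K := √2 ^ (N + 1) * C₁ * japaneseBracket (t - l) ^ (-α) * min c (japaneseBracket l)⁻¹ with hK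
  calc ∫ x, f₁ (t - x) * f₂ (x - l) * min c (japaneseBracket x)⁻¹ ∂ν
      ≤ ∫ x, K * (japaneseBracket (x - l) ^ (N + 1) * f₂ (x - l)) ∂ν :=
        integral_mono_of_nonneg
          (.of_forall fun x ↦ mul_nonneg (mul_nonneg (hf₁ _) (hf₂ _))
            (min_inv_japaneseBracket_nonneg hc x))
          ((hint.comp_sub_right l).const_mul K)
          (.of_forall (mul_mul_min_inv_japaneseBracket_le hf₁ hf₂ hC₁ hN hc t l))
    _ = K * ∫ x, japaneseBracket x ^ (N + 1) * f₂ x ∂ν := by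
        rw [integral_const_mul,
          integral_sub_right_eq_self (fun x ↦ japaneseBracket x ^ (N + 1) * f₂ x) l]
    _ = _ := by rw [hK]; ring

end WeightedConvolution

section Schwartz

open scoped SchwartzMap

variable {E F G : Type*} [NormedAddCommGroup E] [NormedSpace ℝ E]
  [NormedAddCommGroup F] [NormedSpace ℝ F] [NormedAddCommGroup G] [NormedSpace ℝ G]

lemma exists_japaneseBracket_pow_mul_norm_le (g : 𝓢(E, F)) (k : ℕ) :
    ∃ C > 0, ∀ x, japaneseBracket x ^ k * ‖g x‖ ≤ C := by
  set S := 2 ^ k * ((Finset.Iic (k, 0)).sup fun m ↦ SchwartzMap.seminorm ℝ m.1 m.2) g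
  have schwartz_bound (x : E) : (1 + ‖x‖) ^ k * ‖g x‖ ≤ S := by
    simpa only [norm_iteratedFDeriv_zero] using
      SchwartzMap.one_add_le_sup_seminorm_apply (𝕜 := ℝ) (m := (k, 0)) le_rfl le_rfl g x
  refine ⟨max S 1, by positivity, fun x ↦ ?_⟩
  calc japaneseBracket x ^ k * ‖g x‖
      ≤ (1 + ‖x‖) ^ k * ‖g x‖ := by
        gcongr
        · exact (japaneseBracket_pos x).le
        · exact sqrt_one_add_norm_sq_le x
    _ ≤ max S 1 := (schwartz_bound x).trans (le_max_left _ _)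

variable [MeasurableSpace E] [BorelSpace E] [SecondCountableTopology E]
  {ν : Measure E} [ν.HasTemperateGrowth]

lemma integrable_japaneseBracket_pow_mul_norm (g : 𝓢(E, F)) (k : ℕ) :
    Integrable (fun x ↦ japaneseBracket x ^ k * ‖g x‖) ν := by
  have integrable_one_add_norm : Integrable (fun x ↦ (1 + ‖x‖) ^ k * ‖g x‖) ν := by
    simp only [add_pow, one_pow, one_mul, Finset.sum_mul, mul_right_comm _ _ ‖g _‖]
    exact integrable_finsetSum _ fun i _ ↦ (g.integrable_pow_mul ν (k - i)).mul_const _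
  refine integrable_one_add_norm.mono'
    ((continuous_japaneseBracket.pow k).mul g.continuous.norm).aestronglyMeasurable
    (.of_forall fun x ↦ ?_)
  have bracket_nonneg := (japaneseBracket_pos x).le
  rw [Real.norm_of_nonneg (by positivity)]
  gcongr
  exact sqrt_one_add_norm_sq_le x

theorem contribution_I_estimate_general [ν.IsAddRightInvariant]
    (g₁ : 𝓢(E, F)) (g₂ : 𝓢(E, G)) (α : ℝ) :
    ∃ C > 0, ∀ (t l : E) (M : ℝ), 0 < M →
      ∫ x, ‖g₁ (t - x)‖ * ‖g₂ (x - l)‖ * min M⁻¹ (japaneseBracket x)⁻¹ ∂ν ≤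
        C * japaneseBracket (t - l) ^ (-α) * min M⁻¹ (japaneseBracket l)⁻¹ := by
  obtain ⟨N, hN⟩ := exists_nat_ge α
  obtain ⟨C₁, C₁_pos, hC₁⟩ := exists_japaneseBracket_pow_mul_norm_le g₁ N
  set I := ∫ x, japaneseBracket x ^ (N + 1) * ‖g₂ x‖ ∂ν
  have I_nonneg : 0 ≤ I := integral_nonneg fun x ↦
    mul_nonneg (pow_nonneg (japaneseBracket_pos x).le _) (norm_nonneg _)
  refine ⟨√2 ^ (N + 1) * C₁ * (I + 1), by positivity, fun t l M hM ↦ ?_⟩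
  have weight_nonneg := min_inv_japaneseBracket_nonneg (inv_nonneg.2 hM.le) l
  have bracket_nonneg := (japaneseBracket_pos (t - l)).le
  calc _ ≤ √2 ^ (N + 1) * C₁ * I * japaneseBracket (t - l) ^ (-α) *
          min M⁻¹ (japaneseBracket l)⁻¹ :=
        integral_mul_mul_min_inv_japaneseBracket_le (fun _ ↦ norm_nonneg _)
          (fun _ ↦ norm_nonneg _) hC₁ (integrable_japaneseBracket_pow_mul_norm g₂ (N + 1)) hN
          (inv_nonneg.2 hM.le) t l
    _ ≤ _ := by gcongr; exact le_add_of_nonneg_right zero_le_one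

end Schwartz

/-- The estimate of the contribution I in the proof of Proposition 3.2: for Schwartz `g₁, g₂`
and `α > 0`,
`∫ |g₁(τ−μ)||g₂(μ−λ)| min(M^{−1},⟨μ⟩^{−1}) dμ ≲ ⟨τ−λ⟩^{−α} min(M^{−1},⟨λ⟩^{−1})`
uniformly in `M ≥ 1`. -/
theorem contribution_I_estimate (g₁ g₂ : SchwartzMap ℝ ℂ) (α : ℝ) (hα : 0 < α) :
    ∃ C > 0, ∀ (τ lam M : ℝ), 1 ≤ M →
      (∫ μ : ℝ, ‖g₁ (τ - μ)‖ * ‖g₂ (μ - lam)‖ * min M⁻¹ (Real.sqrt (1 + μ ^ 2))⁻¹) ≤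
        C * (1 + (τ - lam) ^ 2) ^ (-(α / 2)) * min M⁻¹ (Real.sqrt (1 + lam ^ 2))⁻¹ := by
  obtain ⟨C, C_pos, hC⟩ := contribution_I_estimate_general (ν := volume) g₁ g₂ α
  refine ⟨C, C_pos, fun τ lam M hM ↦ ?_⟩
  simpa only [↓japaneseBracket_rpow, japaneseBracket, Real.norm_eq_abs, sq_abs, neg_div]
    using hC τ lam M (one_pos.trans_le hM)
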